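/- (Converse direction of the corollary, element form.) Let f ∈ R be homogeneous and assume τ(f^{1−1/p}) ⊆ m but √τ(f^{1−1/p}) ≠ m. Then the sequence {M_e − (n+1)p^e}_{e ≥ e_0} is unbounded below: for every integer N there exist e ≥ e_0 and a homogeneous g ∈ R with g ∉ m^{[e]}, deg(g) − (n+1)p^e < −N, and f^{p−1}·g^p ∈ m^{[e+1]}. (Hence the Frobenius action on H^n_m(R/fR) fails to be injective in arbitrarily negative degrees.) -/

import Mathlib

/-!
Write `τ = τ(f^{1-1/p})`, let `τ*` be the ideal generated by the homogeneous elements of `τ`, and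
put `q = p^e`. Since `τ ⊆ m` and `√τ ≠ m`, some variable `x_i` has no power in `τ`. For `D < q`
the ideal `m^{[e]}` has no elements of degree `D`, so `x_i^D ∉ τ* + m^{[e]}`.
Polynomials modulo `m^{[e]} = (x_0^q, …, x_n^q)` carry the perfect pairing `(u, v) ↦ coeff_s (u v)`
with `s = (q-1, …, q-1)`. By this Macaulay duality, some homogeneous `g ∈ (m^{[e]} : τ*)` has
`g x_i^D ∉ m^{[e]}`. Then `deg g + D ≤ |s| = (n+1)(q-1)`, which is the degree bound once `D ≥ N`.

For `f^{p-1} g^p ∈ m^{[e+1]}`, use the maps `Θ : ∑ u_γ x^γ ↦ ∑ ψ(u_{α + p c}) x^c`, where `ψ` is a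
`p⁻¹`-linear functional on `k` and `α_i < p` for all `i`. They satisfy `Θ(r^p u) = r Θ(u)` and send
`f^{p-1}` to homogeneous elements of `τ`, so `Θ(f^{p-1} g^p) = g Θ(f^{p-1}) ∈ m^{[e]}`. An element
with all of its images under the `Θ` in `m^{[e]}` lies in `m^{[e+1]}`, because every nonzero
coefficient is detected by some `ψ`.
-/

open MvPolynomial

noncomputable section

/-- `I^{[e]}`-style bracket power: the ideal generated by `q`-th powers of elements of `I`. -/
def bracketPow {A : Type*} [CommRing A] (I : Ideal A) (q : ℕ) : Ideal A :=
  Ideal.span ((fun u => u ^ q) '' (I : Set A))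

/-- The test ideal `τ(f^{1 - 1/p^e})`: the smallest ideal `a` with `f^{p^e - 1} ∈ a^{[e]}`. -/
def testIdeal {A : Type*} [CommRing A] (p : ℕ) (f : A) (e : ℕ) : Ideal A :=
  sInf {a : Ideal A | f ^ (p ^ e - 1) ∈ bracketPow a (p ^ e)}

/-- The homogeneous maximal ideal `m = (x_0, ..., x_n)`. -/
def mxI (k : Type*) [Field k] (n : ℕ) : Ideal (MvPolynomial (Fin (n + 1)) k) :=
  Ideal.span (Set.range (X : Fin (n + 1) → MvPolynomial (Fin (n + 1)) k))

/-- The set of degrees of homogeneous elements of `(m^{[e]} : τ) \ m^{[e]}`. -/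
def MeSet (k : Type*) [Field k] (n p : ℕ) (τ : Ideal (MvPolynomial (Fin (n + 1)) k))
    (e : ℕ) : Set ℕ :=
  {d : ℕ | ∃ g : MvPolynomial (Fin (n + 1)) k,
    g ∈ (bracketPow (mxI k n) (p ^ e)).colon τ ∧
    g ∉ bracketPow (mxI k n) (p ^ e) ∧ g.IsHomogeneous d}

/-- `M_e`: the minimal degree of a homogeneous element of `(m^{[e]} : τ) \ m^{[e]}`. -/
def Me (k : Type*) [Field k] (n p : ℕ) (τ : Ideal (MvPolynomial (Fin (n + 1)) k))
    (e : ℕ) : ℕ :=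
  sInf (MeSet k n p τ e)

/-- `e_0`: the least `e` with `τ ⊄ m^{[e]}`. -/
def e0 (k : Type*) [Field k] (n p : ℕ) (τ : Ideal (MvPolynomial (Fin (n + 1)) k)) : ℕ :=
  sInf {e : ℕ | ¬ τ ≤ bracketPow (mxI k n) (p ^ e)}

/-! ### Homogeneous ideals -/

theorem isHomogeneous_colon {ι S A : Type*} [AddRightCancelMonoid ι] [DecidableEq ι] [CommRing A]
    [SetLike S A] [AddSubmonoidClass S A] (𝒜 : ι → S) [GradedRing 𝒜] {I J : Ideal A}
    (hI : I.IsHomogeneous 𝒜) (hJ : J.IsHomogeneous 𝒜) :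
    (J.colon (I : Set A)).IsHomogeneous 𝒜 := by
  classical
  intro j g hg
  refine Submodule.mem_colon.2 fun t ht => ?_
  rw [smul_eq_mul, ← DirectSum.sum_support_decompose 𝒜 t, Finset.mul_sum]
  refine J.sum_mem fun m _ => ?_
  rw [← DirectSum.coe_decompose_mul_add_of_right_mem 𝒜 (SetLike.coe_mem _)]
  exact hJ _ (Submodule.mem_colon.1 hg _ (hI m ht))

theorem exists_isHomogeneousElem_mul_notMem {ι S A : Type*} [AddMonoid ι] [DecidableEq ι]
    [CommRing A] [SetLike S A] [AddSubmonoidClass S A] (𝒜 : ι → S) [GradedRing 𝒜] {J K : Ideal A}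
    (hK : K.IsHomogeneous 𝒜) {g u : A} (hg : g ∈ K) (hgu : g * u ∉ J) :
    ∃ j, ∃ g' ∈ 𝒜 j, g' ∈ K ∧ g' * u ∉ J := by
  classical
  by_contra! h
  apply hgu
  rw [← DirectSum.sum_support_decompose 𝒜 g, Finset.sum_mul]
  exact J.sum_mem fun j _ => h j _ (SetLike.coe_mem _) (hK j hg)

attribute [local instance] MvPolynomial.gradedAlgebra

section BoxIdeal

variable {σ : Type*}

/-- The monomial complete intersection `(x_i^{s_i + 1})_i`, encoded as the ideal of polynomials
all of whose exponents `c` satisfy `¬ c ≤ s`. The monomial `x^s` spans its socle. -/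
def boxIdeal (R : Type*) [CommSemiring R] (s : σ →₀ ℕ) : Ideal (MvPolynomial σ R) :=
  restrictSupportIdeal R (Set.Iic s)ᶜ (isLowerSet_Iic s).compl

variable {R : Type*} [CommRing R] {s : σ →₀ ℕ}

theorem mem_boxIdeal {u : MvPolynomial σ R} : u ∈ boxIdeal R s ↔ ∀ c ≤ s, coeff c u = 0 := by
  change u ∈ restrictSupport R (Set.Iic s)ᶜ ↔ _
  rw [mem_restrictSupport_iff, Set.subset_compl_comm]
  simp [Set.subset_def]

theorem mem_boxIdeal_iff_forall_coeff_mul_eq_zero {u : MvPolynomial σ R} :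
    u ∈ boxIdeal R s ↔ ∀ v, coeff s (v * u) = 0 := by
  refine ⟨fun hu v => mem_boxIdeal.1 (Ideal.mul_mem_left _ v hu) s le_rfl,
    fun h => mem_boxIdeal.2 fun c hc => ?_⟩
  simpa [coeff_monomial_mul', tsub_tsub_cancel_of_le hc] using h (monomial (s - c) 1)

theorem isHomogeneous_boxIdeal : (boxIdeal R s).IsHomogeneous (homogeneousSubmodule σ R) := by
  intro j u hu
  change (decomposition.decompose' u j : MvPolynomial σ R) ∈ _
  rw [decomposition.decompose'_apply]
  refine mem_boxIdeal.2 fun c hc => ?_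
  rw [coeff_homogeneousComponent, mem_boxIdeal.1 hu c hc, ite_self]

theorem homogeneousComponent_eq_zero_of_mem_boxIdeal {D : ℕ} (hD : ∀ i, D ≤ s i)
    {u : MvPolynomial σ R} (hu : u ∈ boxIdeal R s) : homogeneousComponent D u = 0 :=
  homogeneousComponent_eq_zero' D u fun c hc hcD => mem_support_iff.1 hc <|
    mem_boxIdeal.1 hu c fun i => (Finsupp.le_degree i c).trans (hcD.trans_le (hD i))

theorem notMem_sup_boxIdeal {I : Ideal (MvPolynomial σ R)}
    (hI : I.IsHomogeneous (homogeneousSubmodule σ R)) {D : ℕ} (hD : ∀ i, D ≤ s i)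
    {u : MvPolynomial σ R} (hu : u.IsHomogeneous D) (huI : u ∉ I) : u ∉ I ⊔ boxIdeal R s := by
  intro h
  obtain ⟨a, ha, b, hb, rfl⟩ := Submodule.mem_sup.1 h
  apply huI
  rw [← homogeneousComponent_eq_self hu, map_add,
    homogeneousComponent_eq_zero_of_mem_boxIdeal hD hb, add_zero]
  exact homogeneousComponent_mem_of_mem hI ha D

theorem degree_le_of_notMem_boxIdeal {d : ℕ} {u : MvPolynomial σ R} (hu : u.IsHomogeneous d)
    (hus : u ∉ boxIdeal R s) : d ≤ s.degree := by
  rw [mem_boxIdeal] at hus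
  push Not at hus
  obtain ⟨c, hc, hcu⟩ := hus
  have degree_c : c.degree = d := by_contra fun hcd => hcu (hu.coeff_eq_zero hcd)
  exact degree_c.symm.trans_le (Finsupp.degree_mono hc)

/-! ### Macaulay duality -/

theorem exists_forall_coeff_mul_eq (φ : MvPolynomial σ R →ₗ[R] R)
    (hφ : ∀ u ∈ boxIdeal R s, φ u = 0) : ∃ g, ∀ u, coeff s (g * u) = φ u := by
  classical
  let g : MvPolynomial σ R := ∑ b ∈ Finset.Icc 0 s, monomial b (φ (monomial (s - b) 1))
  have coeff_g {b : σ →₀ ℕ} (hb : b ≤ s) : coeff b g = φ (monomial (s - b) 1) := by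
    simp [g, coeff_sum, coeff_monomial, hb]
  have pairing_monomial (c : σ →₀ ℕ) : coeff s (g * monomial c 1) = φ (monomial c 1) := by
    rw [coeff_mul_monomial', mul_one]
    split_ifs with hc
    · rw [coeff_g tsub_le_self, tsub_tsub_cancel_of_le hc]
    · refine (hφ _ (mem_boxIdeal.2 fun b hb => ?_)).symm
      rw [coeff_monomial, if_neg (by rintro rfl; exact hc hb)]
  have pairing_eq : lcoeff R s ∘ₗ LinearMap.mulLeft R g = φ := by
    ext c
    exact pairing_monomial c
  exact ⟨g, fun u => LinearMap.congr_fun pairing_eq u⟩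

/-- Linkage: `J : (J : I) ≤ I + J` for the Gorenstein ideal `J = (x_i^{s_i + 1})_i`. -/
theorem exists_mem_colon_mul_notMem_boxIdeal {k : Type*} [Field k] {I : Ideal (MvPolynomial σ k)}
    {u : MvPolynomial σ k} (hu : u ∉ I ⊔ boxIdeal k s) :
    ∃ g ∈ (boxIdeal k s).colon (I : Set (MvPolynomial σ k)), g * u ∉ boxIdeal k s := by
  obtain ⟨φ, hφu, hφ⟩ := Submodule.exists_le_ker_of_notMem
    (p := (I ⊔ boxIdeal k s).restrictScalars k) hu
  obtain ⟨g, hg⟩ := exists_forall_coeff_mul_eq φ fun v hv => hφ (Ideal.mem_sup_right hv)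
  refine ⟨g, Submodule.mem_colon.2 fun t ht => ?_, fun hgu => hφu ?_⟩
  · rw [smul_eq_mul, mem_boxIdeal_iff_forall_coeff_mul_eq_zero]
    intro v
    rw [mul_left_comm, hg]
    exact hφ (Ideal.mem_sup_left (I.mul_mem_left v ht))
  · rw [← hg, mem_boxIdeal.1 hgu s le_rfl]

theorem exists_isHomogeneous_mem_colon_mul_notMem_boxIdeal {k : Type*} [Field k]
    {I : Ideal (MvPolynomial σ k)} (hI : I.IsHomogeneous (homogeneousSubmodule σ k)) {D : ℕ}
    (hD : ∀ i, D ≤ s i) {u : MvPolynomial σ k} (hu : u.IsHomogeneous D) (huI : u ∉ I) :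
    ∃ j, ∃ g : MvPolynomial σ k, g.IsHomogeneous j ∧
      g ∈ (boxIdeal k s).colon (I : Set (MvPolynomial σ k)) ∧ g * u ∉ boxIdeal k s := by
  obtain ⟨g, hg, hgu⟩ := exists_mem_colon_mul_notMem_boxIdeal (notMem_sup_boxIdeal hI hD hu huI)
  exact exists_isHomogeneousElem_mul_notMem (homogeneousSubmodule σ k)
    (isHomogeneous_colon _ hI isHomogeneous_boxIdeal) hg hgu

end BoxIdeal

/-! ### Cartier maps -/

/-- An additive map is `q`-Cartier linear, or `q⁻¹`-linear, if `φ (a ^ q * x) = a * φ x`. For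
`q = p ^ e` in characteristic `p` these are the `A`-linear maps `F^e_* A → A`. -/
def IsCartierLinear {A : Type*} [CommRing A] (q : ℕ) (φ : A →+ A) : Prop :=
  ∀ a x, φ (a ^ q * x) = a * φ x

theorem IsCartierLinear.apply_mem_of_mem_bracketPow {A : Type*} [CommRing A] {q : ℕ} {φ : A →+ A}
    (hφ : IsCartierLinear q φ) {I : Ideal A} {x : A} (hx : x ∈ bracketPow I q) : φ x ∈ I := by
  induction hx using Submodule.closure_induction with
  | zero => simp
  | add x y _ _ hx hy => simpa using I.add_mem hx hy
  | smul_mem r x hx =>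
    obtain ⟨u, hu, rfl⟩ := hx
    rw [smul_eq_mul, mul_comm, hφ]
    exact I.mul_mem_right _ hu

theorem IsCartierLinear.apply_mem_testIdeal {A : Type*} [CommRing A] {p e : ℕ} {φ : A →+ A}
    (hφ : IsCartierLinear (p ^ e) φ) (f : A) : φ (f ^ (p ^ e - 1)) ∈ testIdeal p f e :=
  Ideal.mem_sInf.2 fun _ hI => hφ.apply_mem_of_mem_bracketPow hI

theorem exists_semilinear_apply_ne_zero {K L : Type*} [Field K] [CommRing L] (F : K →+* L)
    {z : L} (hz : z ≠ 0) : ∃ ψ : L →+ K, (∀ a x, ψ (F a * x) = a * ψ x) ∧ ψ z ≠ 0 := by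
  let _ : Algebra K L := F.toAlgebra
  obtain ⟨φ, hφz⟩ := Module.Projective.exists_dual_ne_zero K hz
  exact ⟨φ.toAddMonoidHom, fun a x => φ.map_smul a x, hφz⟩

theorem exists_isCartierLinear_apply_ne_zero {k : Type*} [Field k] (p e : ℕ) [ExpChar k p] {z : k}
    (hz : z ≠ 0) : ∃ ψ : k →+ k, IsCartierLinear (p ^ e) ψ ∧ ψ z ≠ 0 :=
  exists_semilinear_apply_ne_zero (iterateFrobenius k p e) hz

theorem nsmul_le_add_nsmul_iff {σ : Type*} {q : ℕ} {α b c : σ →₀ ℕ} (hα : ∀ i, α i < q) :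
    q • b ≤ α + q • c ↔ b ≤ c := by
  refine forall_congr' fun i => ⟨fun h => ?_, fun h => ?_⟩
  · have : q * b i < q * (c i + 1) := by
      have := hα i
      simp only [Finsupp.add_apply, Finsupp.smul_apply, smul_eq_mul] at h
      lia
    exact Nat.lt_succ_iff.1 (Nat.lt_of_mul_lt_mul_left this)
  · exact (Nat.mul_le_mul_left q h).trans (Nat.le_add_left _ _)

theorem injective_add_nsmul {σ : Type*} (q : ℕ) [NeZero q] (α : σ →₀ ℕ) :
    Function.Injective fun c : σ →₀ ℕ => α + q • c :=
  (add_right_injective α).comp (nsmul_right_injective (NeZero.ne q))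

section CartierMap

variable {σ k : Type*} [CommRing k] {q : ℕ} [NeZero q] {ψ : k →+ k} {α : σ →₀ ℕ}

/-- The map `∑ u_γ x^γ ↦ ∑ ψ(u_{α + q c}) x^c` on polynomials. It extends a `q`-Cartier linear
`ψ` on the coefficients to a `q`-Cartier linear map when all `α_i < q`. -/
def cartierMap (q : ℕ) [NeZero q] (ψ : k →+ k) (α : σ →₀ ℕ) :
    MvPolynomial σ k →+ MvPolynomial σ k where
  toFun u := AddMonoidAlgebra.ofCoeff <| Finsupp.mapRange ψ ψ.map_zero <|
    (AddMonoidAlgebra.coeff u).comapDomain _ (injective_add_nsmul q α).injOn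
  map_zero' := by
    ext
    exact ψ.map_zero
  map_add' u v := by
    ext
    exact ψ.map_add _ _

theorem coeff_cartierMap (u : MvPolynomial σ k) (c : σ →₀ ℕ) :
    coeff c (cartierMap q ψ α u) = ψ (coeff (α + q • c) u) := rfl

-- If the truncated expression `(d - |α|) / q` is not the exact quotient, the image is `0`.
theorem isHomogeneous_cartierMap {u : MvPolynomial σ k} {d : ℕ} (hu : u.IsHomogeneous d) :
    (cartierMap q ψ α u).IsHomogeneous ((d - α.degree) / q) := by
  intro c hc
  rw [coeff_cartierMap] at hc
  have degree_eq : (α + q • c).degree = d :=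
    by_contra fun hd => hc (by rw [hu.coeff_eq_zero hd, map_zero])
  rw [Pi.one_def, ← Finsupp.degree_eq_weight_one, ← degree_eq, map_add, map_nsmul,
    add_tsub_cancel_left, smul_eq_mul, Nat.mul_div_cancel_left _ (NeZero.pos q)]

variable {p e : ℕ} [Fact p.Prime] [CharP k p]

theorem isCartierLinear_cartierMap (hψ : IsCartierLinear (p ^ e) ψ) (hα : ∀ i, α i < p ^ e) :
    IsCartierLinear (p ^ e) (cartierMap (p ^ e) ψ α) := by
  intro r u
  induction r using MvPolynomial.induction_on' with
  | monomial b a =>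
    ext c
    rw [coeff_cartierMap, monomial_pow, coeff_monomial_mul', coeff_monomial_mul',
      if_congr (nsmul_le_add_nsmul_iff hα) rfl rfl]
    split_ifs with hbc
    · obtain ⟨c, rfl⟩ := le_iff_exists_add.1 hbc
      rw [hψ, coeff_cartierMap, add_tsub_cancel_left, smul_add, add_left_comm,
        add_tsub_cancel_left]
    · exact map_zero ψ
  | add r₁ r₂ h₁ h₂ => rw [add_pow_char_pow, add_mul, add_mul, map_add, h₁, h₂]

end CartierMap

section Descent

variable {σ k : Type*} [Field k] {p e : ℕ} [Fact p.Prime] [CharP k p] {s s' : σ →₀ ℕ}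

theorem mem_boxIdeal_of_forall_cartierMap_mem (hs : ∀ i, s i < p ^ e * (s' i + 1))
    {u : MvPolynomial σ k} (hu : ∀ ψ : k →+ k, IsCartierLinear (p ^ e) ψ →
      ∀ α : σ →₀ ℕ, (∀ i, α i < p ^ e) → cartierMap (p ^ e) ψ α u ∈ boxIdeal k s') :
    u ∈ boxIdeal k s := by
  refine mem_boxIdeal.2 fun γ hγ => by_contra fun hγu => ?_
  obtain ⟨ψ, hψ, hψγ⟩ := exists_isCartierLinear_apply_ne_zero p e hγu
  let α : σ →₀ ℕ := γ.mapRange (· % p ^ e) (Nat.zero_mod _)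
  let c : σ →₀ ℕ := γ.mapRange (· / p ^ e) (Nat.zero_div _)
  have hα : ∀ i, α i < p ^ e := fun i => Nat.mod_lt _ (NeZero.pos _)
  have hc : c ≤ s' := fun i =>
    Nat.lt_succ_iff.1 (Nat.div_lt_of_lt_mul ((hγ i).trans_lt (hs i)))
  have eq_γ : α + p ^ e • c = γ := Finsupp.ext fun i => Nat.mod_add_div (γ i) (p ^ e)
  apply hψγ
  rw [← eq_γ, ← coeff_cartierMap]
  exact mem_boxIdeal.1 (hu ψ hψ α hα) c hc

theorem pow_mul_pow_mem_boxIdeal (hs : ∀ i, s i < p ^ e * (s' i + 1)) {f g : MvPolynomial σ k}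
    {d : ℕ} (hf : f.IsHomogeneous d)
    (hg : g ∈ (boxIdeal k s').colon
      ((testIdeal p f e).homogeneousCore (homogeneousSubmodule σ k) : Set (MvPolynomial σ k))) :
    f ^ (p ^ e - 1) * g ^ p ^ e ∈ boxIdeal k s := by
  refine mem_boxIdeal_of_forall_cartierMap_mem hs fun ψ hψ α hα => ?_
  have hΘ := isCartierLinear_cartierMap hψ hα
  rw [mul_comm, hΘ]
  exact Submodule.mem_colon.1 hg _ <| Ideal.mem_homogeneousCore_of_homogeneous_of_mem
    ⟨_, isHomogeneous_cartierMap (hf.pow _)⟩ (hΘ.apply_mem_testIdeal f)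

end Descent

/-! ### The homogeneous maximal ideal -/

/-- The exponent `(a, …, a)`. For `a = p ^ e - 1` it is the socle exponent of `m^{[e]}`. -/
def constExponent (σ : Type*) [Finite σ] (a : ℕ) : σ →₀ ℕ :=
  Finsupp.equivFunOnFinite.symm fun _ => a

theorem constExponent_apply {σ : Type*} [Finite σ] (a : ℕ) (i : σ) : constExponent σ a i = a :=
  rfl

theorem degree_constExponent {σ : Type*} [Fintype σ] (a : ℕ) :
    (constExponent σ a).degree = Fintype.card σ * a := by
  simp [Finsupp.degree_eq_sum, constExponent_apply]

section MaximalIdeal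

variable {k : Type*} [Field k] {n : ℕ}

theorem mxI_eq_ker_constantCoeff :
    mxI k n = RingHom.ker (constantCoeff : MvPolynomial (Fin (n + 1)) k →+* k) := by
  ext u
  rw [mxI, ← pow_one (Ideal.span _), mem_pow_idealOfVars_iff']
  simp [constantCoeff_eq, Finsupp.degree_eq_zero_iff]

theorem exists_X_notMem_radical {τ : Ideal (MvPolynomial (Fin (n + 1)) k)} (hτ : τ ≤ mxI k n)
    (hrad : τ.radical ≠ mxI k n) : ∃ i, X i ∉ τ.radical := by
  by_contra! hX
  refine hrad (le_antisymm ?_ (Ideal.span_le.2 (Set.range_subset_iff.2 hX)))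
  rw [mxI_eq_ker_constantCoeff] at hτ ⊢
  exact (RingHom.ker_isPrime _).radical_le_iff.2 hτ

theorem bracketPow_span {A : Type*} [CommRing A] (p e : ℕ) [ExpChar A p] (S : Set A) :
    bracketPow (Ideal.span S) (p ^ e) = Ideal.span ((· ^ p ^ e) '' S) :=
  calc bracketPow (Ideal.span S) (p ^ e)
    _ = (Ideal.span S).map (iterateFrobenius A p e) := rfl
    _ = Ideal.span ((· ^ p ^ e) '' S) := Ideal.map_span _ S

theorem bracketPow_mxI (p e : ℕ) [Fact p.Prime] [CharP k p] :
    bracketPow (mxI k n) (p ^ e) = boxIdeal k (constExponent (Fin (n + 1)) (p ^ e - 1)) := by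
  have image_eq : (· ^ p ^ e) '' Set.range (X : Fin (n + 1) → MvPolynomial (Fin (n + 1)) k) =
      (fun c => monomial c 1) '' Set.range (Finsupp.single · (p ^ e)) := by
    simp only [← Set.range_comp, Function.comp_def, X_pow_eq_monomial]
  ext u
  rw [mxI, bracketPow_span, image_eq, mem_ideal_span_monomial_image, mem_boxIdeal]
  refine forall_congr' fun c => ?_
  rw [mem_support_iff, not_imp_comm, Set.exists_range_iff, not_exists]
  refine imp_congr_left (forall_congr' fun i => ?_)
  have := NeZero.pos (p ^ e)
  rw [Finsupp.single_le_iff, constExponent_apply]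
  lia

theorem pow_mul_pow_mem_bracketPow_mxI {p a e : ℕ} [Fact p.Prime] [CharP k p]
    {f g : MvPolynomial (Fin (n + 1)) k} {d : ℕ} (hf : f.IsHomogeneous d)
    (hg : g ∈ (bracketPow (mxI k n) (p ^ a)).colon
      ((testIdeal p f e).homogeneousCore (homogeneousSubmodule (Fin (n + 1)) k) :
        Set (MvPolynomial (Fin (n + 1)) k))) :
    f ^ (p ^ e - 1) * g ^ p ^ e ∈ bracketPow (mxI k n) (p ^ (a + e)) := by
  rw [bracketPow_mxI] at hg ⊢
  have exponent_lt : p ^ (a + e) - 1 < p ^ e * (p ^ a - 1 + 1) := by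
    rw [Nat.sub_add_cancel (NeZero.pos (p ^ a)), ← pow_add, add_comm]
    exact Nat.sub_lt (NeZero.pos _) one_pos
  exact pow_mul_pow_mem_boxIdeal (fun _ => exponent_lt) hf hg

end MaximalIdeal

/-- Converse direction of the corollary, element form: If `f` is homogeneous,
`τ(f^{1−1/p}) ⊆ m` but `√τ(f^{1−1/p}) ≠ m`, then for every integer `N` there exist `e ≥ e_0`
and a homogeneous `g ∉ m^{[e]}` with `deg g − (n+1)p^e < −N` and `f^{p−1}·g^p ∈ m^{[e+1]}`. -/
theorem Me_unbounded_below_of_not_isolated {k : Type*} [Field k] {p n : ℕ}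
    [Fact p.Prime] [CharP k p]
    (f : MvPolynomial (Fin (n + 1)) k) (d : ℕ) (hf : f.IsHomogeneous d)
    (hτm : testIdeal p f 1 ≤ mxI k n)
    (hrad : (testIdeal p f 1).radical ≠ mxI k n) :
    ∀ N : ℤ, ∃ e : ℕ, e0 k n p (testIdeal p f 1) ≤ e ∧
      ∃ g : MvPolynomial (Fin (n + 1)) k, ∃ dg : ℕ,
        g.IsHomogeneous dg ∧ g ∉ bracketPow (mxI k n) (p ^ e) ∧
        (dg : ℤ) - (n + 1) * p ^ e < -N ∧
        f ^ (p - 1) * g ^ p ∈ bracketPow (mxI k n) (p ^ (e + 1)) := by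
  intro N
  obtain ⟨i, hi⟩ := exists_X_notMem_radical hτm hrad
  set τ := testIdeal p f 1
  let D := N.toNat
  let e := max (e0 k n p τ) D
  let s := constExponent (Fin (n + 1)) (p ^ e - 1)
  have D_lt : D < p ^ e :=
    (le_max_right _ _).trans_lt (Nat.lt_pow_self (Fact.out : p.Prime).one_lt)
  have X_pow_notMem : X i ^ D ∉ (τ.homogeneousCore (homogeneousSubmodule _ k)).toIdeal :=
    fun h => hi ⟨D, Ideal.toIdeal_homogeneousCore_le _ τ h⟩
  obtain ⟨j, g, hg, hgτ, hgX⟩ := exists_isHomogeneous_mem_colon_mul_notMem_boxIdeal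
    (s := s) (HomogeneousIdeal.isHomogeneous _) (fun _ => Nat.le_sub_one_of_lt D_lt)
    (isHomogeneous_X_pow i D) X_pow_notMem
  refine ⟨e, le_max_left _ _, g, j, hg, ?_, ?_, ?_⟩
  · rw [bracketPow_mxI]
    exact fun h => hgX (Ideal.mul_mem_right _ _ h)
  · have degree_le : j + D ≤ (n + 1) * (p ^ e - 1) := by
      simpa [s, degree_constExponent] using
        degree_le_of_notMem_boxIdeal (hg.mul (isHomogeneous_X_pow i D)) hgX
    zify [show 1 ≤ p ^ e by lia] at degree_le
    linarith [Int.self_le_toNat N]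
  · rw [← bracketPow_mxI] at hgτ
    simpa using pow_mul_pow_mem_bracketPow_mxI (e := 1) hf hgτ

end
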